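/- Let α = (X_g, α_g)_{g∈G} be a partial action of a groupoid G on a set X, and suppose the global action β = (Y_g, β_g)_{g∈G} of G on Y is a globalization of α (with X ⊆ Y and i the inclusion). Then α is transitive if and only if β is transitive. -/

import Mathlib

universe u v w

/-- A groupoid as an algebraic structure: a set `G` with a (totalized) partially
defined multiplication, inversion, source `d` and range `r`.  The product `mul g h`
is only meaningful when `d g = r h`. -/
structure SetGroupoid (G : Type u) where
  mul : G → G → G
  inv : G → G
  d : G → G
  r : G → G
  inv_inv : ∀ g, inv (inv g) = g
  d_inv : ∀ g, d (inv g) = r g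
  r_inv : ∀ g, r (inv g) = d g
  mul_d_self : ∀ g, mul g (d g) = g
  r_mul_self : ∀ g, mul (r g) g = g
  inv_mul : ∀ g, mul (inv g) g = d g
  mul_inv : ∀ g, mul g (inv g) = r g
  d_mul : ∀ g h, d g = r h → d (mul g h) = d h
  r_mul : ∀ g h, d g = r h → r (mul g h) = r g
  mul_assoc : ∀ g h k, d g = r h → d h = r k → mul (mul g h) k = mul g (mul h k)
  d_idem : ∀ g, d (d g) = d g
  r_d : ∀ g, r (d g) = d g

/-- A (set theoretical) partial action of a groupoid `G` on a set `X`: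
subsets `D g = X_g` and (totalized) bijections `act g : X_{g⁻¹} → X_g`, together with
the anchor map sending `x` to the unique identity `e` with `x ∈ X_e`. -/
structure PartialAction {G : Type u} (𝒢 : SetGroupoid G) (X : Type v) where
  D : G → Set X
  act : G → X → X
  anchor : X → G
  anchor_isUnit : ∀ x, 𝒢.d (anchor x) = anchor x
  mem_anchor : ∀ x, x ∈ D (anchor x)
  anchor_unique : ∀ x e, 𝒢.d e = e → x ∈ D e → e = anchor x
  D_subset : ∀ g, D g ⊆ D (𝒢.r g)
  act_unit : ∀ e, 𝒢.d e = e → ∀ x ∈ D e, act e x = x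
  act_mem : ∀ g, ∀ x ∈ D (𝒢.inv g), act g x ∈ D g
  act_act : ∀ g, ∀ x ∈ D (𝒢.inv g), act (𝒢.inv g) (act g x) = x
  act_comp_mem : ∀ g h, 𝒢.d g = 𝒢.r h → ∀ x, x ∈ D (𝒢.inv g) → x ∈ D h →
      act g x ∈ D (𝒢.mul g h)
  act_comp : ∀ g h, 𝒢.d g = 𝒢.r h → ∀ x, x ∈ D (𝒢.inv h) → act h x ∈ D (𝒢.inv g) →
      act g (act h x) = act (𝒢.mul g h) x

namespace PartialAction

variable {G : Type u} {X : Type v} {𝒢 : SetGroupoid G}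

/-- A partial action is global if `α_{gh} = α_g ∘ α_h` (as partial maps, including
equality of domains) for every composable pair `(g,h) ∈ G²`. -/
def IsGlobal (α : PartialAction 𝒢 X) : Prop :=
  ∀ g h, 𝒢.d g = 𝒢.r h →
    ((∀ x, x ∈ α.D (𝒢.inv (𝒢.mul g h)) ↔ x ∈ α.D (𝒢.inv h) ∧ α.act h x ∈ α.D (𝒢.inv g)) ∧
      ∀ x ∈ α.D (𝒢.inv (𝒢.mul g h)), α.act (𝒢.mul g h) x = α.act g (α.act h x))

/-- Transitivity: some point has orbit equal to all of `X`. -/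
def Transitive (α : PartialAction 𝒢 X) : Prop :=
  ∃ x : X, ∀ y : X, ∃ g, x ∈ α.D (𝒢.inv g) ∧ y = α.act g x

/-- Freeness: every stabilizer reduces to the anchor identity. -/
def Free (α : PartialAction 𝒢 X) : Prop :=
  ∀ (x : X) (g : G), x ∈ α.D (𝒢.inv g) → α.act g x = x → g = α.anchor x

end PartialAction

/-- `β` (a global action of `G` on `Y`) is a globalization of the partial action `α`
of `G` on `X`, via the injection `i : X → Y`. -/
structure IsGlobalization {G : Type u} {X : Type v} {Y : Type w} {𝒢 : SetGroupoid G}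
    (α : PartialAction 𝒢 X) (β : PartialAction 𝒢 Y) (i : X → Y) : Prop where
  global : β.IsGlobal
  inj : Function.Injective i
  cond_i : ∀ g, i '' α.D g = Set.range i ∩ β.act g '' (Set.range i ∩ β.D (𝒢.inv g))
  cond_ii : ∀ g, ∀ x ∈ α.D (𝒢.inv g), β.act g (i x) = i (α.act g x)
  cond_iii : ∀ g, β.D g = ⋃ h ∈ {h : G | 𝒢.r h = 𝒢.r g}, β.act h '' (i '' α.D (𝒢.d h))

theorem SetGroupoid.inv_unit' {G : Type u} (𝒢 : SetGroupoid G) (e : G) (he : 𝒢.d e = e) :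
    𝒢.r e = e ∧ 𝒢.inv e = e := by
  have h1 : 𝒢.r e = e := by
    have := 𝒢.r_d e
    rwa [he] at this
  refine ⟨h1, ?_⟩
  have h2 := 𝒢.mul_d_self (𝒢.inv e)
  rw [𝒢.d_inv, h1, 𝒢.inv_mul, he] at h2
  exact h2.symm

theorem SetGroupoid.r_r' {G : Type u} (𝒢 : SetGroupoid G) (g : G) : 𝒢.r (𝒢.r g) = 𝒢.r g := by
  rw [← 𝒢.d_inv g, 𝒢.r_d]

theorem IsGlobalization.D_r' {G : Type u} {X : Type v} {Y : Type w} {𝒢 : SetGroupoid G}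
    {α : PartialAction 𝒢 X} {β : PartialAction 𝒢 Y} {i : X → Y}
    (h : IsGlobalization α β i) (g : G) : β.D (𝒢.r g) = β.D g := by
  rw [h.cond_iii (𝒢.r g), h.cond_iii g, 𝒢.r_r']

theorem IsGlobalization.mem' {G : Type u} {X : Type v} {Y : Type w} {𝒢 : SetGroupoid G}
    {α : PartialAction 𝒢 X} {β : PartialAction 𝒢 Y} {i : X → Y}
    (h : IsGlobalization α β i) (e : G) (he : 𝒢.d e = e) (x : X) (hx : x ∈ α.D e) :
    i x ∈ β.D e := by
  have h1 : i x ∈ i '' α.D e := ⟨x, hx, rfl⟩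
  rw [h.cond_i, (𝒢.inv_unit' e he).2] at h1
  obtain ⟨_, y, ⟨_, hy⟩, hyx⟩ := h1
  rw [β.act_unit e he y hy] at hyx
  exact hyx ▸ hy

theorem IsGlobalization.ex' {G : Type u} {X : Type v} {Y : Type w} {𝒢 : SetGroupoid G}
    {α : PartialAction 𝒢 X} {β : PartialAction 𝒢 Y} {i : X → Y}
    (h : IsGlobalization α β i) (y : Y) :
    ∃ k z, 𝒢.r k = β.anchor y ∧ z ∈ α.D (𝒢.d k) ∧ i z ∈ β.D (𝒢.inv k) ∧ β.act k (i z) = y := by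
  have hy := β.mem_anchor y
  rw [h.cond_iii] at hy
  simp only [Set.mem_iUnion, Set.mem_ofPred_eq] at hy
  obtain ⟨k, hk, _, ⟨z, hz, rfl⟩, hzy⟩ := hy
  refine ⟨k, z, hk.trans (𝒢.inv_unit' _ (β.anchor_isUnit y)).1, hz, ?_, hzy⟩
  rw [← h.D_r', 𝒢.r_inv]
  exact h.mem' _ (𝒢.d_idem k) z hz

/-- If the global action `β` of `G` on `Y` is a globalization of the
partial action `α` of `G` on `X`, then `α` is transitive iff `β` is transitive. -/
theorem transitive_iff_globalization_transitive {G : Type u} {X : Type v} {Y : Type w}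
    {𝒢 : SetGroupoid G} (α : PartialAction 𝒢 X) (β : PartialAction 𝒢 Y) (i : X → Y)
    (h : IsGlobalization α β i) :
    α.Transitive ↔ β.Transitive := by
  constructor
  · rintro ⟨x, hx⟩
    refine ⟨i x, fun y => ?_⟩
    obtain ⟨k, z, hk, hz, hiz, rfl⟩ := h.ex' y
    obtain ⟨g, hg, rfl⟩ := hx z
    have hr : 𝒢.d (𝒢.r g) = 𝒢.r g := by rw [← 𝒢.d_inv, 𝒢.d_idem]
    have hc : 𝒢.d k = 𝒢.r g :=
      (α.anchor_unique _ _ (𝒢.d_idem k) hz).trans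
        (α.anchor_unique _ _ hr (α.D_subset g (α.act_mem g x hg))).symm
    have hix : i x ∈ β.D (𝒢.inv g) := by
      rw [← h.D_r', 𝒢.r_inv]
      apply h.mem' _ (𝒢.d_idem g)
      rw [← 𝒢.r_inv]
      exact α.D_subset _ hg
    rw [← h.cond_ii g x hg] at hiz ⊢
    exact ⟨𝒢.mul k g, ((h.global k g hc).1 _).2 ⟨hix, hiz⟩, β.act_comp k g hc _ hix hiz⟩
  · rintro ⟨y, hy⟩
    obtain ⟨k, z, hk, hz, hiz, hzy⟩ := h.ex' y
    refine ⟨z, fun w => ?_⟩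
    obtain ⟨g, hg, hw⟩ := hy (i w)
    have hc : 𝒢.d g = 𝒢.r k := by
      rw [hk]
      apply β.anchor_unique _ _ (𝒢.d_idem g)
      rw [← 𝒢.r_inv]
      exact β.D_subset _ hg
    subst hzy
    rw [β.act_comp g k hc _ hiz hg] at hw
    have hm := ((h.global g k hc).1 _).2 ⟨hiz, hg⟩
    generalize 𝒢.mul g k = m at hw hm
    have h1 : i w ∈ i '' α.D m := by
      rw [h.cond_i]
      exact ⟨⟨w, rfl⟩, i z, ⟨⟨z, rfl⟩, hm⟩, hw.symm⟩
    obtain ⟨w', hw', hww⟩ := h1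
    obtain rfl := h.inj hww
    have hw2 : w' ∈ α.D (𝒢.inv (𝒢.inv m)) := by rwa [𝒢.inv_inv]
    have h2 := h.cond_ii (𝒢.inv m) w' hw2
    rw [hw, β.act_act m _ hm] at h2
    have h3 := h.inj h2
    refine ⟨m, ?_, ?_⟩
    · rw [h3]; exact α.act_mem _ _ hw2
    · have h4 := α.act_act _ _ hw2
      rw [𝒢.inv_inv, ← h3] at h4
      exact h4.symm
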